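/- For L = 3: for every positive integer N with N ∉ {3, 9, 15} one has g_3(N) ≥ 0, and g_3(3) ≥ −1, g_3(9) ≥ −1, g_3(15) ≥ −1. Equivalently, the series G_{3,2}(q) + q^3 + q^9 + q^{15} has all coefficients nonnegative. -/

import Mathlib

/-- Partitions of `N` with smallest part equal to `2` and largest part at most `L+2`. -/
def InSmall2 (L : ℕ) {N : ℕ} (p : N.Partition) : Prop :=
  2 ∈ p.parts ∧ ∀ x ∈ p.parts, 2 ≤ x ∧ x ≤ L + 2

/-- Nonempty partitions of `N` with smallest part at least `3` and
largest part minus smallest part at most `L`. -/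
def InBig3 (L : ℕ) {N : ℕ} (p : N.Partition) : Prop :=
  p.parts ≠ 0 ∧ (∀ x ∈ p.parts, 3 ≤ x) ∧ ∀ x ∈ p.parts, ∀ y ∈ p.parts, x ≤ y + L

/-- `g_L(N)`: the coefficient of `q^N` in `G_{L,2}(q)`. -/
noncomputable def gL (L N : ℕ) : ℤ :=
  (Nat.card {p : N.Partition // InSmall2 L p} : ℤ) -
    (Nat.card {p : N.Partition // InBig3 L p} : ℤ)

/-- Number of partitions of `n` with all parts in `s`. -/
noncomputable def cntQ (s : Finset ℕ) (n : ℕ) : ℕ :=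
  Nat.card {p : n.Partition // ∀ x ∈ p.parts, x ∈ s}

theorem card_contains (s : Finset ℕ) (m n : ℕ) (hm : 0 < m) (hs : m ∈ s) :
    Nat.card {p : (n + m).Partition // m ∈ p.parts ∧ ∀ x ∈ p.parts, x ∈ s} = cntQ s n := by
  unfold cntQ
  refine Nat.card_congr
    { toFun := fun p => ⟨⟨p.1.parts.erase m, ?_, ?_⟩, ?_⟩
      invFun := fun p => ⟨⟨m ::ₘ p.1.parts, ?_, ?_⟩, ?_⟩
      left_inv := ?_
      right_inv := ?_ }
  · intro i hi
    exact p.1.parts_pos (Multiset.mem_of_mem_erase hi)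
  · have h1 := Multiset.cons_erase p.2.1
    have h2 := p.1.parts_sum
    rw [← h1, Multiset.sum_cons] at h2
    omega
  · intro x hx
    exact p.2.2 x (Multiset.mem_of_mem_erase hx)
  · intro i hi
    rcases Multiset.mem_cons.1 hi with h | h
    · omega
    · exact p.1.parts_pos h
  · rw [Multiset.sum_cons, p.1.parts_sum, add_comm]
  · refine ⟨Multiset.mem_cons_self _ _, fun x hx => ?_⟩
    rcases Multiset.mem_cons.1 hx with h | h
    · rw [h]; exact hs
    · exact p.2 x h
  · intro p
    apply Subtype.ext
    apply Nat.Partition.ext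
    exact Multiset.cons_erase p.2.1
  · intro p
    apply Subtype.ext
    apply Nat.Partition.ext
    exact Multiset.erase_cons_head _ _

theorem card_split {α : Type*} [Fintype α] (A B : α → Prop) :
    Nat.card {p : α // A p} = Nat.card {p : α // B p ∧ A p} + Nat.card {p : α // ¬ B p ∧ A p} := by
  classical
  simp only [Nat.card_eq_fintype_card, Fintype.card_subtype]
  rw [← Finset.card_filter_add_card_filter_not (s := Finset.univ.filter A) B,
    Finset.filter_filter, Finset.filter_filter]
  simp only [and_comm]

theorem card_not_contains (s : Finset ℕ) (m n : ℕ) :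
    Nat.card {p : n.Partition // ¬ m ∈ p.parts ∧ ∀ x ∈ p.parts, x ∈ s}
      = cntQ (s.erase m) n := by
  unfold cntQ
  refine Nat.card_congr (Equiv.subtypeEquivRight fun p => ?_)
  simp only [Finset.mem_erase]
  constructor
  · rintro ⟨h1, h2⟩ x hx
    exact ⟨fun h => h1 (h ▸ hx), h2 x hx⟩
  · intro h
    exact ⟨fun h1 => (h m h1).1 rfl, fun x hx => (h x hx).2⟩

theorem cntQ_add (s : Finset ℕ) (m n : ℕ) (hm : 0 < m) (hs : m ∈ s) :
    cntQ s (n + m) = cntQ s n + cntQ (s.erase m) (n + m) := by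
  rw [← card_contains s m n hm hs, ← card_not_contains s m (n + m)]
  exact card_split _ _

theorem part_le {n m : ℕ} (p : n.Partition) (h : m ∈ p.parts) : m ≤ n := by
  have := Multiset.single_le_sum (s := p.parts) (fun x _ => Nat.zero_le x) m h
  rwa [p.parts_sum] at this

theorem cntQ_lt (s : Finset ℕ) (m n : ℕ) (hn : n < m) :
    cntQ s n = cntQ (s.erase m) n := by
  rw [← card_not_contains s m n]
  unfold cntQ
  refine Nat.card_congr (Equiv.subtypeEquivRight fun p => ?_)
  constructor
  · intro h
    exact ⟨fun h1 => by have := part_le p h1; omega, h⟩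
  · exact fun h => h.2

theorem cntQ_empty_zero : cntQ ∅ 0 = 1 := by
  unfold cntQ
  rw [Nat.card_eq_one_iff_unique]
  refine ⟨⟨fun a b => Subtype.ext (Subsingleton.elim _ _)⟩, ⟨⟨default, ?_⟩⟩⟩
  intro x hx
  have h1 := part_le _ hx
  have h2 := Nat.Partition.parts_pos _ hx
  omega

theorem cntQ_eq_zero (s : Finset ℕ) (n : ℕ) (hn : 0 < n) (hs : ∀ x ∈ s, n < x) :
    cntQ s n = 0 := by
  unfold cntQ
  rw [Nat.card_eq_zero]
  left
  refine ⟨fun p => ?_⟩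
  have h0 : p.1.parts ≠ 0 := by
    intro h
    have := p.1.parts_sum
    rw [h] at this
    simp at this
    omega
  obtain ⟨x, hx⟩ := Multiset.exists_mem_of_ne_zero h0
  have := part_le _ hx
  have := hs x (p.2 x hx)
  omega

/-- Computable version of the count. -/
def cc : List ℕ → ℕ → ℕ
  | [], n => if n = 0 then 1 else 0
  | m :: l, n => ∑ k ∈ Finset.range (n / m + 1), cc l (n - k * m)

theorem cc_lt (m : ℕ) (l : List ℕ) (n : ℕ) (h : n < m) : cc (m :: l) n = cc l n := by
  simp [cc, Nat.div_eq_of_lt h]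

theorem cc_add (m : ℕ) (l : List ℕ) (n : ℕ) (h : 0 < m) :
    cc (m :: l) (n + m) = cc (m :: l) n + cc l (n + m) := by
  simp only [cc]
  rw [Nat.add_div_right _ h, Finset.sum_range_succ']
  congr 1
  · refine Finset.sum_congr rfl fun k _ => ?_
    congr 1
    rw [add_mul, one_mul]
    omega
  · simp

theorem cntQ_eq_cc (l : List ℕ) (hl : l.Nodup) (hp : ∀ x ∈ l, 0 < x) :
    ∀ n, cntQ l.toFinset n = cc l n := by
  induction l with
  | nil =>
    intro n
    rcases Nat.eq_zero_or_pos n with h | h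
    · subst h; simp [cc, cntQ_empty_zero]
    · rw [cntQ_eq_zero _ _ h (by simp)]; simp [cc]; omega
  | cons m l ih =>
    have hm : 0 < m := hp m (by simp)
    have hml := (List.nodup_cons.1 hl).1
    have ih' := ih (List.nodup_cons.1 hl).2 (fun x hx => hp x (by simp [hx]))
    have he : ((m :: l).toFinset).erase m = l.toFinset := by
      rw [List.toFinset_cons, Finset.erase_insert (by simpa using hml)]
    intro n
    induction n using Nat.strong_induction_on with
    | _ n ihn =>
      rcases Nat.lt_or_ge n m with h | h
      · rw [cntQ_lt _ m n h, he, ih', cc_lt _ _ _ h]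
      · obtain ⟨k, rfl⟩ := Nat.exists_eq_add_of_le' h
        rw [cntQ_add _ m k hm (by simp), he, ih', cc_add _ _ _ hm, ihn k (by omega)]

/-- Partitions of `N` with smallest part `m`, largest at most `m+3`, summed over `m`. -/
def bb (N : ℕ) : ℕ := ∑ m ∈ Finset.Icc 3 N, cc [m, m+1, m+2, m+3] (N - m)

theorem cntQ_Icc4 (m n : ℕ) (hm : 0 < m) : cntQ (Finset.Icc m (m+3)) n = cc [m, m+1, m+2, m+3] n := by
  rw [← cntQ_eq_cc _ (by simp) (by simp; omega)]
  congr 1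
  ext x
  simp
  omega

theorem cntQ_Icc3 (m n : ℕ) (hm : 0 < m) : cntQ (Finset.Icc m (m+2)) n = cc [m, m+1, m+2] n := by
  rw [← cntQ_eq_cc _ (by simp) (by simp; omega)]
  congr 1
  ext x
  simp
  omega

theorem erase_left (m : ℕ) : (Finset.Icc m (m+3)).erase m = Finset.Icc (m+1) (m+1+2) := by
  ext x; simp

theorem erase_right (m : ℕ) : (Finset.Icc m (m+3)).erase (m+3) = Finset.Icc m (m+2) := by
  ext x; simp <;> omega

theorem step_le (m N : ℕ) (hm : 0 < m) (h : m ≤ N) :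
    cntQ (Finset.Icc m (m+3)) (N + 3 - m) + cntQ (Finset.Icc (m+1) (m+1+2)) (N+3)
      = cntQ (Finset.Icc m (m+3)) (N - m) + cntQ (Finset.Icc m (m+2)) (N+3) := by
  have h1 := cntQ_add (Finset.Icc m (m+3)) m (N+3-m) hm (by simp)
  have h2 := cntQ_add (Finset.Icc m (m+3)) (m+3) (N-m) (by omega) (by simp)
  rw [erase_left, show N + 3 - m + m = N + 3 by omega] at h1
  rw [erase_right, show N - m + (m + 3) = N + 3 by omega] at h2
  omega

theorem step_gt (m N : ℕ) (hm : 0 < m) (h : N < m) (h' : m ≤ N + 3) :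
    cntQ (Finset.Icc m (m+3)) (N + 3 - m) + cntQ (Finset.Icc (m+1) (m+1+2)) (N+3)
      = cntQ (Finset.Icc m (m+2)) (N+3) := by
  have h1 := cntQ_add (Finset.Icc m (m+3)) m (N+3-m) hm (by simp)
  have h2 := cntQ_lt (Finset.Icc m (m+3)) (m+3) (N+3) (by omega)
  rw [erase_left, show N + 3 - m + m = N + 3 by omega] at h1
  rw [erase_right] at h2
  omega

theorem bb_partial (N k : ℕ) (hk : k ≤ N + 1) :
    ∑ m ∈ Finset.range k, cntQ (Finset.Icc (m+3) (m+3+3)) (N + 3 - (m+3))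
      + cntQ (Finset.Icc (k+3) (k+3+2)) (N+3)
    = ∑ m ∈ Finset.range k, (if m + 3 ≤ N then cntQ (Finset.Icc (m+3) (m+3+3)) (N - (m+3)) else 0)
      + cntQ (Finset.Icc 3 5) (N+3) := by
  induction k with
  | zero => simp
  | succ k ih =>
    have ih := ih (by omega)
    rw [Finset.sum_range_succ, Finset.sum_range_succ]
    rw [show k + 1 + 3 = k + 3 + 1 by omega]
    split_ifs with h
    · have := step_le (k+3) N (by omega) h
      omega
    · have := step_gt (k+3) N (by omega) (by omega) (by omega)
      omega

theorem bb_eq (N : ℕ) : bb N =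
    ∑ m ∈ Finset.range (N - 2), cntQ (Finset.Icc (m+3) (m+3+3)) (N - (m+3)) := by
  unfold bb
  rw [show Finset.Icc 3 N = Finset.Ico 3 (N+1) by ext; simp,
    Finset.sum_Ico_eq_sum_range]
  rw [show N + 1 - 3 = N - 2 by omega]
  refine Finset.sum_congr rfl fun m _ => ?_
  rw [cntQ_Icc4 _ _ (by omega), add_comm 3 m]

theorem bb_step (N : ℕ) : bb (N + 3) = bb N + cc [3, 4, 5] (N + 3) := by
  have h := bb_partial N (N+1) le_rfl
  rw [cntQ_eq_zero (Finset.Icc (N+1+3) (N+1+3+2)) (N+3) (by omega)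
    (by intro x hx; simp at hx; omega)] at h
  rw [bb_eq, bb_eq, show N + 3 - 2 = N + 1 by omega, ← cntQ_Icc3 3 _ (by omega)]
  rw [add_zero] at h
  rw [h]
  congr 1
  rw [← Finset.sum_filter]
  refine Finset.sum_congr ?_ fun _ _ => rfl
  ext x
  simp
  omega

theorem small_eq (n : ℕ) :
    Nat.card {p : (n + 2).Partition // InSmall2 3 p} = cc [2, 3, 4, 5] n := by
  rw [← cntQ_Icc4 2 n (by omega), ← card_contains _ 2 n (by omega) (by simp)]
  refine Nat.card_congr (Equiv.subtypeEquivRight fun p => ?_)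
  simp [InSmall2]

theorem big_sum (N : ℕ) : Nat.card {p : N.Partition // InBig3 3 p} =
    ∑ m ∈ Finset.Icc 3 N,
      Nat.card {p : N.Partition // m ∈ p.parts ∧ ∀ x ∈ p.parts, x ∈ Finset.Icc m (m+3)} := by
  classical
  simp only [Nat.card_eq_fintype_card, Fintype.card_subtype]
  rw [← Finset.card_biUnion]
  · congr 1
    ext p
    simp only [Finset.mem_filter, Finset.mem_univ, true_and, Finset.mem_biUnion, Finset.mem_Icc]
    constructor
    · rintro ⟨h0, h1, h2⟩
      obtain ⟨y, hy⟩ := Multiset.exists_mem_of_ne_zero h0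
      have hne : p.parts.toFinset.Nonempty := ⟨y, by simpa using hy⟩
      have hm : p.parts.toFinset.min' hne ∈ p.parts := by
        simpa using Finset.min'_mem _ hne
      refine ⟨p.parts.toFinset.min' hne, ⟨h1 _ hm, part_le p hm⟩, hm, fun x hx => ⟨?_, h2 _ hx _ hm⟩⟩
      exact Finset.min'_le _ _ (by simpa using hx)
    · rintro ⟨m, ⟨h3, _⟩, hm, h⟩
      refine ⟨fun h0 => by simp [h0] at hm, fun x hx => ?_, fun x hx y hy => ?_⟩
      · have := h x hx; omega
      · have := h x hx
        have := h y hy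
        omega
  · intro a _ b _ hab
    simp only [Function.onFun]
    rw [Finset.disjoint_left]
    intro p hp hq
    simp only [Finset.mem_filter, Finset.mem_univ, true_and, Finset.mem_Icc] at hp hq
    have := hp.2 b hq.1
    have := hq.2 a hp.1
    omega

theorem big_eq (N : ℕ) : Nat.card {p : N.Partition // InBig3 3 p} = bb N := by
  rw [big_sum, bb]
  refine Finset.sum_congr rfl fun m hm => ?_
  rw [Finset.mem_Icc] at hm
  rw [← cntQ_Icc4 _ _ (by omega)]
  obtain ⟨k, rfl⟩ := Nat.exists_eq_add_of_le' hm.2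
  rw [card_contains _ m k (by omega) (by simp), Nat.add_sub_cancel]

theorem g_eq (n : ℕ) : gL 3 (n + 2) = (cc [2, 3, 4, 5] n : ℤ) - bb (n + 2) := by
  rw [gL, small_eq, big_eq]

theorem cc_mid (a m : ℕ) (l : List ℕ) (n : ℕ) (ha : 0 < a) (hm : 0 < m) (hl : (a :: m :: l).Nodup)
    (hp : ∀ x ∈ l, 0 < x) :
    cc (a :: m :: l) (n + m) = cc (a :: m :: l) n + cc (a :: l) (n + m) := by
  have hp1 : ∀ x ∈ a :: l, 0 < x := by
    intro x hx
    rcases List.mem_cons.1 hx with h | h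
    · omega
    · exact hp x h
  have hp2 : ∀ x ∈ m :: a :: l, 0 < x := by
    intro x hx
    rcases List.mem_cons.1 hx with h | h
    · omega
    · exact hp1 x h
  have hl2 : (m :: a :: l).Nodup := (List.Perm.swap m a l).nodup hl
  have e : ∀ n, cc (a :: m :: l) n = cc (m :: a :: l) n := by
    intro n
    rw [← cntQ_eq_cc _ hl (by intro x hx; apply hp2; simp at hx ⊢; tauto), ← cntQ_eq_cc _ hl2 hp2]
    congr 1
    ext x
    simp
    tauto
  rw [e, e, cc_add _ _ _ hm]

theorem cc_perm (l l' : List ℕ) (h : l.Perm l') (hl : l.Nodup) (hp : ∀ x ∈ l, 0 < x) (n : ℕ) :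
    cc l n = cc l' n := by
  rw [← cntQ_eq_cc l hl hp, ← cntQ_eq_cc l' (h.nodup_iff.1 hl) (fun x hx => hp x (h.mem_iff.2 hx))]
  congr 1
  exact List.toFinset_eq_of_perm _ _ h

theorem cc2_pair (n : ℕ) : cc [2] n + cc [2] (n + 1) = 1 := by
  induction n with
  | zero => decide
  | succ n ih =>
    have h := cc_add 2 [] n (by omega)
    have : cc [] (n + 2) = 0 := by simp [cc]
    rw [show n + 1 + 1 = n + 2 by omega]
    omega

theorem cc4_per (n : ℕ) : cc [4] (n + 4) = cc [4] n := by
  have h := cc_add 4 [] n (by omega)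
  have : cc [] (n + 4) = 0 := by simp [cc]
  omega

theorem cc4_win (n : ℕ) :
    cc [4] n + cc [4] (n + 1) + cc [4] (n + 2) + cc [4] (n + 3) = 1 := by
  induction n with
  | zero => decide
  | succ n ih =>
    have h := cc4_per n
    rw [show n + 1 + 1 = n + 2 by omega, show n + 1 + 2 = n + 3 by omega,
      show n + 1 + 3 = n + 4 by omega]
    omega

theorem cc34_per (n : ℕ) : cc [3, 4] (n + 12) = cc [3, 4] n + 1 := by
  have h1 := cc_add 3 [4] n (by omega)
  have h2 := cc_add 3 [4] (n + 3) (by omega)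
  have h3 := cc_add 3 [4] (n + 6) (by omega)
  have h4 := cc_add 3 [4] (n + 9) (by omega)
  have w := cc4_win (n + 3)
  have p1 := cc4_per (n + 5)
  have p2 := cc4_per (n + 4)
  have p3 := cc4_per (n + 8)
  simp only [add_assoc, Nat.reduceAdd] at *
  omega

theorem cc24_per (n : ℕ) : cc [4, 2] (n + 12) = cc [4, 2] n + 3 * cc [2] n := by
  have h1 := cc_add 4 [2] n (by omega)
  have h2 := cc_add 4 [2] (n + 4) (by omega)
  have h3 := cc_add 4 [2] (n + 8) (by omega)
  have q : ∀ m, cc [2] (m + 2) = cc [2] m := by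
    intro m
    have a := cc2_pair m
    have b := cc2_pair (m + 1)
    simp only [add_assoc, Nat.reduceAdd] at *
    omega
  have q1 := q n
  have q2 := q (n + 2)
  have q3 := q (n + 4)
  have q4 := q (n + 6)
  have q5 := q (n + 8)
  have q6 := q (n + 10)
  simp only [add_assoc, Nat.reduceAdd] at *
  omega

theorem lin_ineq (n : ℕ) :
    cc [3, 4] (n + 5) + cc [3, 4] (n + 10) ≤ cc [4, 2] (n + 3) + cc [4, 2] (n + 8) := by
  induction n using Nat.strong_induction_on with
  | _ n ih =>
    rcases Nat.lt_or_ge n 12 with h | h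
    · revert n
      intro n _ h
      have key : ∀ n < 12, cc [3, 4] (n + 5) + cc [3, 4] (n + 10)
          ≤ cc [4, 2] (n + 3) + cc [4, 2] (n + 8) := by decide +kernel
      exact key n h
    · obtain ⟨k, rfl⟩ := Nat.exists_eq_add_of_le' h
      have i := ih k (by omega)
      have a1 := cc34_per (k + 5)
      have a2 := cc34_per (k + 10)
      have a3 := cc24_per (k + 3)
      have a4 := cc24_per (k + 8)
      have w0 := cc2_pair (k + 3)
      have w1 := cc2_pair (k + 4)
      have w2 := cc2_pair (k + 5)
      have w3 := cc2_pair (k + 6)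
      have w4 := cc2_pair (k + 7)
      rw [show k + 12 + 5 = k + 5 + 12 by omega, show k + 12 + 10 = k + 10 + 12 by omega,
        show k + 12 + 3 = k + 3 + 12 by omega, show k + 12 + 8 = k + 8 + 12 by omega]
      simp only [add_assoc, Nat.reduceAdd] at w0 w1 w2 w3 w4
      omega

theorem quad_ineq (n : ℕ) : cc [5, 3, 4] (n + 16) ≤ cc [5, 4, 2] (n + 14) := by
  induction n using Nat.strong_induction_on with
  | _ n ih =>
    rcases Nat.lt_or_ge n 10 with h | h
    · have key : ∀ n < 10, cc [5, 3, 4] (n + 16) ≤ cc [5, 4, 2] (n + 14) := by decide +kernel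
      exact key n h
    · obtain ⟨k, rfl⟩ := Nat.exists_eq_add_of_le' h
      have i := ih k (by omega)
      have a1 := cc_add 5 [3, 4] (k + 16) (by omega)
      have a2 := cc_add 5 [3, 4] (k + 21) (by omega)
      have b1 := cc_add 5 [4, 2] (k + 14) (by omega)
      have b2 := cc_add 5 [4, 2] (k + 19) (by omega)
      have l := lin_ineq (k + 16)
      simp only [add_assoc, Nat.reduceAdd] at *
      omega

theorem main_ineq (n : ℕ) : bb (n + 16) ≤ cc [2, 3, 4, 5] (n + 14) := by
  induction n using Nat.strong_induction_on with
  | _ n ih =>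
    rcases Nat.lt_or_ge n 3 with h | h
    · have key : ∀ n < 3, bb (n + 16) ≤ cc [2, 3, 4, 5] (n + 14) := by decide +kernel
      exact key n h
    · obtain ⟨k, rfl⟩ := Nat.exists_eq_add_of_le' h
      have i := ih k (by omega)
      have a1 := bb_step (k + 16)
      have a2 := cc_mid 2 3 [4, 5] (k + 14) (by omega) (by omega) (by decide) (by decide)
      have e1 := cc_perm [2, 4, 5] [5, 4, 2] (by decide) (by decide) (by decide) (k + 17)
      have e2 := cc_perm [3, 4, 5] [5, 3, 4] (by decide) (by decide) (by decide) (k + 19)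
      have q := quad_ineq (k + 3)
      simp only [add_assoc, Nat.reduceAdd] at *
      omega

theorem stmt_15 :
    (∀ N : ℕ, 0 < N → N ≠ 3 → N ≠ 9 → N ≠ 15 → 0 ≤ gL 3 N) ∧
      -1 ≤ gL 3 3 ∧ -1 ≤ gL 3 9 ∧ -1 ≤ gL 3 15 := by
  refine ⟨fun N h0 h3 h9 h15 => ?_, ?_, ?_, ?_⟩
  · rcases Nat.lt_or_ge N 16 with h | h
    · rcases Nat.lt_or_ge N 2 with h2 | h2
      · have h1 : N = 1 := by omega
        subst h1
        rw [gL, big_eq]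
        simp [bb]
      · obtain ⟨k, rfl⟩ := Nat.exists_eq_add_of_le' h2
        rw [g_eq]
        have key : ∀ k < 14, k ≠ 1 → k ≠ 7 → k ≠ 13 → bb (k + 2) ≤ cc [2, 3, 4, 5] k := by
          decide +kernel
        have := key k (by omega) (by omega) (by omega) (by omega)
        omega
    · obtain ⟨k, rfl⟩ := Nat.exists_eq_add_of_le' h
      have := main_ineq k
      rw [show k + 16 = k + 14 + 2 by omega, g_eq]
      rw [show k + 16 = k + 14 + 2 by omega] at this
      omega
  · rw [g_eq 1]; decide +kernel
  · rw [g_eq 7]; decide +kernel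
  · rw [g_eq 13]; decide +kernel
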